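/- arXiv:2008.09565 — 2 statements merged into one kernel-verified Lean document; each statement's English description precedes it below -/
import Mathlib

section
/- Let M_1,…,M_r be monomials in K[x_1,…,x_n] and I_i the principal L_{E_i}-Borel ideal generated by M_i, where E_i is the set of essential variables of I_i and every variable dividing M_i lies in E_i. Assume the ordering I_1,…,I_r is L-free. Let φ : K[x_1,…,x_n, T_{m,i} : m ∈ G_i, 1 ≤ i ≤ r] → K[x_1,…,x_n,t_1,…,t_r] be the presentation of the multi-Rees algebra, φ(x_j) = x_j and φ(T_{m,i}) = m·t_i, where G_i = L_{E_i}-Borel(M_i). Then ker(φ) is generated by the quadrics of symmetric type and of fiber type (principal and bi-principal). -/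
/-- An `L_U`-Borel move: replace one factor `x_j` of `m` by `x_i`, where
`x_i, x_j ∈ U` and `i < j`. -/
def LBorelStep (n : ℕ) (U : Set (Fin n)) (m m' : Fin n →₀ ℕ) : Prop :=
  ∃ i j : Fin n, i ∈ U ∧ j ∈ U ∧ i < j ∧ 0 < m j ∧
    m' + Finsupp.single j 1 = m + Finsupp.single i 1

/-- `L_U`-Borel(M): all monomials obtainable from `M` by `L_U`-Borel moves
(including `M` itself); this is the minimal generating set of the principal
`L_U`-Borel ideal generated by `M`. -/
def LBorelSet (n : ℕ) (U : Set (Fin n)) (M : Fin n →₀ ℕ) : Set (Fin n →₀ ℕ) :=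
  {m | Relation.ReflTransGen (LBorelStep n U) M m}

/-- The variables `T_{g,i}`, one for each minimal generator `g` of the principal
`L_{E_i}`-Borel ideal generated by `M_i`. -/
def TVar (n r : ℕ) (E : Fin r → Set (Fin n)) (M : Fin r → (Fin n →₀ ℕ)) : Type :=
  Σ i : Fin r, {g : Fin n →₀ ℕ // g ∈ LBorelSet n (E i) (M i)}

/-- The quadrics of symmetric type: `x_s·T_{g,i} − x_u·T_{(x_s/x_u)g, i}` with
`g ∈ G_i`, `x_u ∣ g`, `x_s, x_u ∈ E_i`, `s < u`. -/
def symQuadrics (K : Type*) [Field K] (n r : ℕ) (E : Fin r → Set (Fin n))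
    (M : Fin r → (Fin n →₀ ℕ)) : Set (MvPolynomial (Fin n ⊕ TVar n r E M) K) :=
  {b | ∃ (i : Fin r) (g g' : {g : Fin n →₀ ℕ // g ∈ LBorelSet n (E i) (M i)})
      (s u : Fin n),
    s < u ∧ s ∈ E i ∧ u ∈ E i ∧ 0 < g.1 u ∧
    g'.1 + Finsupp.single u 1 = g.1 + Finsupp.single s 1 ∧
    b = MvPolynomial.X (Sum.inl s) * MvPolynomial.X (Sum.inr ⟨i, g⟩) -
        MvPolynomial.X (Sum.inl u) * MvPolynomial.X (Sum.inr ⟨i, g'⟩)}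

/-- The quadrics of principal fiber type:
`T_{g,i}·T_{h,i} − T_{(x_s/x_u)g, i}·T_{(x_u/x_s)h, i}` with `g, h ∈ G_i`, `s < u`,
`x_u ∣ g`, `x_s ∣ h`, `x_s, x_u ∈ E_i`, and `(x_s/x_u)g, (x_u/x_s)h ∈ G_i`. -/
def prinQuadrics (K : Type*) [Field K] (n r : ℕ) (E : Fin r → Set (Fin n))
    (M : Fin r → (Fin n →₀ ℕ)) : Set (MvPolynomial (Fin n ⊕ TVar n r E M) K) :=
  {b | ∃ (i : Fin r) (g h g' h' : {g : Fin n →₀ ℕ // g ∈ LBorelSet n (E i) (M i)})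
      (s u : Fin n),
    s < u ∧ s ∈ E i ∧ u ∈ E i ∧ 0 < g.1 u ∧ 0 < h.1 s ∧
    g'.1 + Finsupp.single u 1 = g.1 + Finsupp.single s 1 ∧
    h'.1 + Finsupp.single s 1 = h.1 + Finsupp.single u 1 ∧
    b = MvPolynomial.X (Sum.inr ⟨i, g⟩) * MvPolynomial.X (Sum.inr ⟨i, h⟩) -
        MvPolynomial.X (Sum.inr ⟨i, g'⟩) * MvPolynomial.X (Sum.inr ⟨i, h'⟩)}

/-- The quadrics of bi-principal fiber type:
`T_{g,i}·T_{h,j} − T_{(x_u/x_s)g, i}·T_{(x_s/x_u)h, j}` with `i < j`, `g ∈ G_i`,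
`h ∈ G_j`, `s < u`, `x_s ∣ g`, `x_u ∣ h`, `x_s, x_u ∈ E_i ∩ E_j`, and
`(x_u/x_s)g ∈ G_i`, `(x_s/x_u)h ∈ G_j`. -/
def biQuadrics (K : Type*) [Field K] (n r : ℕ) (E : Fin r → Set (Fin n))
    (M : Fin r → (Fin n →₀ ℕ)) : Set (MvPolynomial (Fin n ⊕ TVar n r E M) K) :=
  {b | ∃ (i j : Fin r), i < j ∧
    ∃ (g g' : {g : Fin n →₀ ℕ // g ∈ LBorelSet n (E i) (M i)})
      (h h' : {g : Fin n →₀ ℕ // g ∈ LBorelSet n (E j) (M j)}) (s u : Fin n),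
    s < u ∧ s ∈ E i ∧ u ∈ E i ∧ s ∈ E j ∧ u ∈ E j ∧ 0 < g.1 s ∧ 0 < h.1 u ∧
    g'.1 + Finsupp.single s 1 = g.1 + Finsupp.single u 1 ∧
    h'.1 + Finsupp.single u 1 = h.1 + Finsupp.single s 1 ∧
    b = MvPolynomial.X (Sum.inr ⟨i, g⟩) * MvPolynomial.X (Sum.inr ⟨j, h⟩) -
        MvPolynomial.X (Sum.inr ⟨i, g'⟩) * MvPolynomial.X (Sum.inr ⟨j, h'⟩)}

/-!
Let `x_1, …, x_n` play the role of the generators of one more ideal, placed last. Since Borel moves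
only shift degree towards the smaller variables, `L_U`-Borel(M) consists of the monomials that agree
with `M` outside `U`, have its degree, and have at most its degree in each tail `x_k, …, x_n`. Two
products of presentation variables with the same image contain the same number of generators from
each ideal: the powers of `t_1, …, t_r` count all but the last kind, and the degree in
`x_1, …, x_n` then counts the last. So their factors can be paired within each ideal.

Let `x_k` be the largest variable on which some pair disagrees, and choose such a pair from the
earliest possible ideal. One of its factors, `p`, lacks an `x_k`, so another factor `q` of the same
product has one too many. By the tail description `p` can exchange some smaller `x_s` for an `x_k`,
and by 𝖫-freeness, as `q` belongs to the same or a later ideal, `x_s` may replace `x_k` in `q`. This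
trade is a quadric relation. It lowers the total disagreement in `x_k` and changes no exponent of a
larger variable, so finitely many trades make the two products equal.
-/

namespace MultiRees

section MultisetSums

lemma eq_of_count_eq_of_sum_map_eq {α : Type*} [DecidableEq α] {A B : Multiset α}
    {δ : α → ℕ} {a : α} (ha : δ a ≠ 0) (hcount : ∀ b ≠ a, A.count b = B.count b)
    (hsum : (A.map δ).sum = (B.map δ).sum) : A = B := by
  have hfilter : A.filter (¬ · = a) = B.filter (¬ · = a) := by
    ext b
    by_cases hb : b = a
    · simp [hb]
    · simp [hb, hcount b hb]
  rw [← Multiset.filter_add_not (· = a) A, ← Multiset.filter_add_not (· = a) B,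
    hfilter, Multiset.filter_eq', Multiset.filter_eq'] at hsum ⊢
  have hcount_a : A.count a = B.count a := by simpa [ha] using hsum
  rw [hcount_a]

lemma sum_map_apply {α τ : Type*} (w : α → τ →₀ ℕ) (S : Multiset α) (t : τ) :
    (S.map w).sum t = (S.map fun a ↦ w a t).sum := by
  simpa using map_multiset_sum (Finsupp.applyAddHom t) (S.map w)

lemma count_map_eq_sum {α β : Type*} [DecidableEq β] (f : α → β) (S : Multiset α) (b : β) :
    (S.map f).count b = (S.map fun a ↦ if b = f a then 1 else 0).sum := by
  induction S using Multiset.induction_on with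
  | empty => rfl
  | cons a S ih =>
    rw [Multiset.map_cons, Multiset.count_cons, Multiset.map_cons, Multiset.sum_cons, ih, add_comm]

end MultisetSums

section Replacement

variable {σ : Type*}

/-- `g' = (x_k / x_s) g` on the level of exponent vectors: one factor `x_s` of `g` is replaced
by `x_k`. The equation is cleared of denominators, so no truncated subtraction occurs. -/
def IsReplacement (s k : σ) (g g' : σ →₀ ℕ) : Prop :=
  g' + Finsupp.single s 1 = g + Finsupp.single k 1

namespace IsReplacement

variable {s k : σ} {g g' : σ →₀ ℕ}

lemma symm (h : IsReplacement s k g g') : IsReplacement k s g' g :=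
  Eq.symm h

lemma apply_source (h : IsReplacement s k g g') (hsk : s ≠ k) : g' s + 1 = g s := by
  simpa [hsk.symm] using DFunLike.congr_fun h s

lemma apply_target (h : IsReplacement s k g g') (hsk : s ≠ k) : g' k = g k + 1 :=
  (h.symm.apply_source hsk.symm).symm

lemma apply_of_ne (h : IsReplacement s k g g') {j : σ} (hs : j ≠ s) (hk : j ≠ k) :
    g' j = g j := by
  simpa [hs.symm, hk.symm] using DFunLike.congr_fun h j

lemma degree_eq (h : IsReplacement s k g g') : g'.degree = g.degree := by
  simpa using congrArg Finsupp.degree h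

lemma add_eq_add {q q' : σ →₀ ℕ} (h : IsReplacement s k g g') (hq : IsReplacement k s q q') :
    g' + q' = g + q := by
  refine add_right_cancel (b := Finsupp.single s 1 + Finsupp.single k 1) ?_
  rw [add_add_add_comm, h, hq, add_add_add_comm, add_comm (Finsupp.single k 1)]

lemma eq_of_single {i j : σ} (hsk : s ≠ k)
    (h : IsReplacement s k (Finsupp.single i 1) (Finsupp.single j 1)) : i = s ∧ j = k := by
  classical
  have hs := h.apply_source hsk
  have hk := h.apply_target hsk
  simp only [Finsupp.single_apply] at hs hk
  constructor <;> by_contra hne <;> simp [hne] at hs hk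

end IsReplacement

lemma exists_isReplacement {s : σ} {g : σ →₀ ℕ} (k : σ) (hs : 0 < g s) :
    ∃ g', IsReplacement s k g g' := by
  refine ⟨g - Finsupp.single s 1 + Finsupp.single k 1, ?_⟩
  rw [IsReplacement, add_right_comm, tsub_add_cancel_of_le (Finsupp.single_le_iff.2 hs)]

end Replacement

section BorelExchange

variable {σ : Type*} [LinearOrder σ] {U : Set σ}

/-- The exchange properties shared by the minimal generators of a principal `L_U`-Borel ideal and,
when `U` consists of all variables, by the set of variables itself. Raising replaces a factor by a
larger variable `x_k`, towards a given member of `G`; lowering is a Borel move. -/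
structure BorelExchange (U : Set σ) (G : Set (σ →₀ ℕ)) : Prop where
  mem_of_ne : ∀ ⦃g⦄, g ∈ G → ∀ ⦃h⦄, h ∈ G → ∀ ⦃j⦄, g j ≠ h j → j ∈ U
  exists_raise : ∀ ⦃g⦄, g ∈ G → ∀ ⦃h⦄, h ∈ G → ∀ ⦃k⦄, (∀ j > k, g j = h j) → g k < h k →
    ∃ s < k, s ∈ U ∧ ∃ g' ∈ G, IsReplacement s k g g'
  exists_lower : ∀ ⦃g⦄, g ∈ G → ∀ ⦃s k⦄, s < k → s ∈ U → k ∈ U → 0 < g k →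
    ∃ g' ∈ G, IsReplacement k s g g'

lemma borelExchange_variables :
    BorelExchange Set.univ (Set.range fun j : σ ↦ Finsupp.single j 1) where
  mem_of_ne _ _ _ _ j _ := Set.mem_univ j
  exists_raise := by
    rintro _ ⟨i, rfl⟩ _ ⟨j, rfl⟩ k habove hk
    obtain rfl : j = k := by
      by_contra hjk
      simp [Ne.symm hjk, Finsupp.single_apply] at hk
    have hij : i ≠ j := by rintro rfl; exact hk.false
    refine ⟨i, lt_of_not_ge fun hji ↦ ?_, Set.mem_univ i, _, ⟨j, rfl⟩, add_comm _ _⟩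
    simpa [hij.symm] using habove i (hji.lt_of_ne' hij)
  exists_lower := by
    rintro _ ⟨i, rfl⟩ s k _ _ _ hk
    obtain rfl : i = k := by
      by_contra hik
      simp [hik] at hk
    exact ⟨_, ⟨s, rfl⟩, add_comm _ _⟩

variable [Fintype σ]

/-- The total degree of a monomial in the variables `x_j` with `k ≤ j`. -/
def tailDegree (g : σ →₀ ℕ) (k : σ) : ℕ := ∑ j with k ≤ j, g j

lemma tailDegree_lt {g h : σ →₀ ℕ} {j k : σ} (hle : ∀ i ≥ j, g i ≤ h i) (hjk : j ≤ k)
    (hlt : g k < h k) : tailDegree g j < tailDegree h j :=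
  Finset.sum_lt_sum (fun i hi ↦ hle i (by simpa using hi)) ⟨k, by simpa using hjk, hlt⟩

lemma IsReplacement.tailDegree_add {s k : σ} {g g' : σ →₀ ℕ} (h : IsReplacement s k g g')
    (j : σ) : tailDegree g' j + (if j ≤ s then 1 else 0) =
      tailDegree g j + (if j ≤ k then 1 else 0) := by
  simpa [tailDegree, Finset.sum_add_distrib, Finsupp.single_apply] using
    congrArg (tailDegree · j) h

lemma IsReplacement.tailDegree_le {s k : σ} {g g' : σ →₀ ℕ} (h : IsReplacement s k g g')
    (hsk : s < k) (j : σ) : tailDegree g j ≤ tailDegree g' j := by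
  have htail := h.tailDegree_add j
  by_cases hj : j ≤ s
  · rw [if_pos hj, if_pos (hj.trans hsk.le)] at htail
    omega
  · rw [if_neg hj] at htail
    omega

/-- The closed description of `L_U`-Borel(M): a Borel move preserves the total degree and the
exponents outside `U`, and moves factors out of every tail `x_k, x_{k+1}, …`. -/
structure BorelDominated (U : Set σ) (M g : σ →₀ ℕ) : Prop where
  apply_eq : ∀ j ∉ U, g j = M j
  degree_eq : g.degree = M.degree
  tailDegree_le : ∀ k, tailDegree g k ≤ tailDegree M k

namespace BorelDominated

variable {M g h : σ →₀ ℕ}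

lemma refl (U : Set σ) (M : σ →₀ ℕ) : BorelDominated U M M :=
  ⟨fun _ _ ↦ rfl, rfl, fun _ ↦ le_rfl⟩

lemma mem_of_ne (hg : BorelDominated U M g) (hh : BorelDominated U M h) {j : σ}
    (hne : g j ≠ h j) : j ∈ U := by
  by_contra hj
  exact hne ((hg.apply_eq j hj).trans (hh.apply_eq j hj).symm)

lemma replace (hg : BorelDominated U M g) {s k : σ} (hs : s ∈ U) (hk : k ∈ U)
    {g' : σ →₀ ℕ} (hg' : IsReplacement s k g g')
    (htail : ∀ j, tailDegree g' j ≤ tailDegree M j) : BorelDominated U M g' where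
  apply_eq j hj := by
    rw [hg'.apply_of_ne (ne_of_mem_of_not_mem hs hj).symm (ne_of_mem_of_not_mem hk hj).symm,
      hg.apply_eq j hj]
  degree_eq := hg'.degree_eq.trans hg.degree_eq
  tailDegree_le := htail

lemma lower (hg : BorelDominated U M g) {s k : σ} (hsk : s < k) (hs : s ∈ U) (hk : k ∈ U)
    {g' : σ →₀ ℕ} (hg' : IsReplacement k s g g') : BorelDominated U M g' :=
  hg.replace hk hs hg' fun j ↦ (hg'.symm.tailDegree_le hsk j).trans (hg.tailDegree_le j)

lemma exists_raise (hg : BorelDominated U M g) (hh : BorelDominated U M h) {k : σ}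
    (habove : ∀ j > k, g j = h j) (hk : g k < h k) :
    ∃ s < k, s ∈ U ∧ ∃ g', BorelDominated U M g' ∧ IsReplacement s k g g' := by
  have hexcess : ({s | s < k ∧ h s < g s} : Finset σ).Nonempty := by
    by_contra! hempty
    have hle : ∀ j, g j ≤ h j := fun j ↦ by
      rcases lt_trichotomy j k with hj | rfl | hj
      · simpa [hj] using Finset.ext_iff.1 hempty j
      · exact hk.le
      · exact (habove j hj).le
    have hlt : g.degree < h.degree := by
      simpa only [Finsupp.degree_eq_sum] using
        Finset.sum_lt_sum (fun j _ ↦ hle j) ⟨k, Finset.mem_univ k, hk⟩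
    exact hlt.ne (hg.degree_eq.trans hh.degree_eq.symm)
  -- Taking `s` as large as possible leaves `g ≤ h` between `s` and `k`.
  obtain ⟨s, hs, hmax⟩ := Finset.exists_max_image _ id hexcess
  simp only [Finset.mem_filter, Finset.mem_univ, true_and, id, and_imp] at hs hmax
  obtain ⟨hsk, hlt⟩ := hs
  obtain ⟨g', hg'⟩ := exists_isReplacement k (Nat.zero_lt_of_lt hlt)
  have hsU : s ∈ U := hg.mem_of_ne hh hlt.ne'
  have hkU : k ∈ U := hg.mem_of_ne hh hk.ne
  refine ⟨s, hsk, hsU, g', hg.replace hsU hkU hg' fun j ↦ ?_, hg'⟩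
  have htail := hg'.tailDegree_add j
  by_cases hj : s < j ∧ j ≤ k
  · have hle : ∀ i ≥ j, g i ≤ h i := fun i hi ↦ by
      rcases lt_trichotomy i k with hik | rfl | hik
      · by_contra! hlt'
        exact ((hj.1.trans_le hi).trans_le (hmax i hik hlt')).false
      · exact hk.le
      · exact (habove i hik).le
    have hstrict := tailDegree_lt hle hj.2 hk
    have hhM := hh.tailDegree_le j
    rw [if_neg hj.1.not_ge, if_pos hj.2] at htail
    omega
  · have hiff : j ≤ s ↔ j ≤ k :=
      ⟨fun hjs ↦ hjs.trans hsk.le, fun hjk ↦ not_lt.1 fun hsj ↦ hj ⟨hsj, hjk⟩⟩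
    have hgM := hg.tailDegree_le j
    simp only [hiff, add_left_inj] at htail
    omega

lemma exists_top_lt (hg : BorelDominated U M g) (hne : g ≠ M) :
    ∃ k, (∀ j > k, g j = M j) ∧ g k < M k := by
  rcases lt_or_gt_of_ne (toColex.injective.ne hne) with ⟨k, habove, hk⟩ | ⟨k, habove, hk⟩
  · exact ⟨k, habove, hk⟩
  · have hle : ∀ i ≥ k, M i ≤ g i := fun i hi ↦
      hi.eq_or_lt.elim (fun e ↦ e ▸ hk.le) fun hki ↦ (habove i hki).le
    exact absurd (hg.tailDegree_le k) (tailDegree_lt hle le_rfl hk).not_ge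

end BorelDominated

lemma borelExchange_setOf_borelDominated (U : Set σ) (M : σ →₀ ℕ) :
    BorelExchange U {g | BorelDominated U M g} where
  mem_of_ne _ hg _ hh _ hne := hg.mem_of_ne hh hne
  exists_raise _ hg _ hh _ habove hk := hg.exists_raise hh habove hk
  exists_lower _ hg s _ hsk hs hk hpos :=
    (exists_isReplacement s hpos).imp fun _ hg' ↦
      ⟨BorelDominated.lower hg hsk hs hk hg', hg'⟩

end BorelExchange

section LBorelSet

variable {n : ℕ} {U : Set (Fin n)} {M g : Fin n →₀ ℕ}

lemma borelDominated_of_mem_LBorelSet (hg : g ∈ LBorelSet n U M) : BorelDominated U M g := by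
  change Relation.ReflTransGen (LBorelStep n U) M g at hg
  induction hg with
  | refl => exact .refl U M
  | tail _ hstep ih =>
    obtain ⟨s, k, hs, hk, hsk, -, hrep⟩ := hstep
    exact ih.lower hsk hs hk hrep

lemma BorelDominated.mem_LBorelSet (hg : BorelDominated U M g) : g ∈ LBorelSet n U M := by
  induction hN : ∑ j, (tailDegree M j - tailDegree g j) using Nat.strong_induction_on
    generalizing g with
  | _ N ih =>
    by_cases hne : g = M
    · exact hne ▸ Relation.ReflTransGen.refl
    obtain ⟨k, habove, hk⟩ := hg.exists_top_lt hne
    obtain ⟨s, hsk, hs, g', hg', hrep⟩ := hg.exists_raise (.refl U M) habove hk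
    have hdecrease :
        ∑ j, (tailDegree M j - tailDegree g' j) < ∑ j, (tailDegree M j - tailDegree g j) := by
      refine Finset.sum_lt_sum (fun j _ ↦ ?_) ⟨k, Finset.mem_univ k, ?_⟩
      · exact Nat.sub_le_sub_left (hrep.tailDegree_le hsk j) _
      · have htail := hrep.tailDegree_add k
        have hgM := hg'.tailDegree_le k
        rw [if_neg hsk.not_ge, if_pos le_rfl] at htail
        omega
    have hpos : 0 < g' k := by have := hrep.apply_target hsk.ne; omega
    exact (ih _ (hN ▸ hdecrease) hg' rfl).tail
      ⟨s, k, hs, hg.mem_of_ne (.refl U M) hk.ne, hsk, hpos, hrep.symm⟩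

theorem mem_LBorelSet_iff : g ∈ LBorelSet n U M ↔ BorelDominated U M g :=
  ⟨borelDominated_of_mem_LBorelSet, BorelDominated.mem_LBorelSet⟩

lemma borelExchange_LBorelSet (U : Set (Fin n)) (M : Fin n →₀ ℕ) :
    BorelExchange U (LBorelSet n U M) := by
  convert borelExchange_setOf_borelDominated U M
  exact Set.ext fun _ ↦ mem_LBorelSet_iff

end LBorelSet

section Straightening

variable {σ V L R : Type*} [CommMonoid R]
variable {mon : V → σ →₀ ℕ} {lab : V → L} {f : V → R} {P : Multiset (V × V)}

/-- The quadratic exchanges available in the fiber of a monomial map. Here `mon p` is the exponent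
vector and `lab p` the label of a variable `p`, and `f` is a multiplicative invariant. When `p`
lacks an `x_k` compared with `p₀` and `q` has one too many compared with `q₀`, and `p` has the
smaller label, an `x_k` of `q` can be traded for a smaller variable of `p` without changing
`f p * f q`. -/
def HasExchange [LinearOrder σ] [LE L] (mon : V → σ →₀ ℕ) (lab : V → L) (f : V → R) : Prop :=
  ∀ ⦃p p₀ q q₀ : V⦄ ⦃k : σ⦄, lab p = lab p₀ → lab q = lab q₀ → lab p ≤ lab q →
    (∀ j > k, mon p j = mon p₀ j) → mon p k < mon p₀ k → mon q₀ k < mon q k →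
    ∃ s < k, ∃ p' q', lab p' = lab p ∧ lab q' = lab q ∧
      IsReplacement s k (mon p) (mon p') ∧ IsReplacement k s (mon q) (mon q') ∧
      f p * f q = f p' * f q'

/-- A pairing of the factors of two products of variables in the same fiber: paired factors have
the same label, and both products have the same exponent vector. -/
structure Balanced (mon : V → σ →₀ ℕ) (lab : V → L) (P : Multiset (V × V)) : Prop where
  lab_eq : ∀ x ∈ P, lab x.1 = lab x.2
  sum_eq : (P.map fun x ↦ mon x.1).sum = (P.map fun x ↦ mon x.2).sum

/-- The total difference, in the exponent of `x_j`, between paired factors. -/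
def discrepancy (mon : V → σ →₀ ℕ) (P : Multiset (V × V)) (j : σ) : ℕ :=
  (P.map fun x ↦ Nat.dist (mon x.1 j) (mon x.2 j)).sum

lemma Balanced.swap (hP : Balanced mon lab P) : Balanced mon lab (P.map Prod.swap) where
  lab_eq := by
    intro x hx
    obtain ⟨y, hy, rfl⟩ := Multiset.mem_map.1 hx
    exact (hP.lab_eq y hy).symm
  sum_eq := by simpa [Multiset.map_map] using hP.sum_eq.symm

lemma discrepancy_swap : discrepancy mon (P.map Prod.swap) = discrepancy mon P := by
  funext j
  simp [discrepancy, Multiset.map_map, Nat.dist_comm]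

lemma Balanced.exists_gt (hP : Balanced mon lab P) {u : V × V} (hu : u ∈ P) {k : σ}
    (hk : mon u.1 k < mon u.2 k) : ∃ v ∈ P, mon v.2 k < mon v.1 k := by
  by_contra! hle
  have hsum := DFunLike.congr_fun hP.sum_eq k
  simp only [sum_map_apply] at hsum
  exact (Multiset.sum_lt_sum hle ⟨u, hu, hk⟩).ne hsum

variable [LinearOrder σ]

lemma Balanced.exists_discrepancy_lt [LE L] (hP : Balanced mon lab P)
    (hex : HasExchange mon lab f) {k : σ} (habove : ∀ x ∈ P, ∀ j > k, mon x.1 j = mon x.2 j)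
    {u : V × V} (hu : u ∈ P) (hmin : ∀ x ∈ P, mon x.1 k ≠ mon x.2 k → lab u.1 ≤ lab x.1)
    (hk : mon u.1 k < mon u.2 k) :
    ∃ P', Balanced mon lab P' ∧ toColex (discrepancy mon P') < toColex (discrepancy mon P) ∧
      (P'.map fun x ↦ f x.1).prod = (P.map fun x ↦ f x.1).prod ∧
      (P'.map fun x ↦ f x.2).prod = (P.map fun x ↦ f x.2).prod := by
  obtain ⟨v, hv, hvk⟩ := hP.exists_gt hu hk
  obtain ⟨s, hsk, p', q', hp', hq', hrepu, hrepv, hf⟩ := hex (hP.lab_eq u hu) (hP.lab_eq v hv)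
    (hmin v hv hvk.ne') (habove u hu) hk hvk
  obtain ⟨Q, rfl⟩ := Multiset.exists_cons_of_mem hu
  obtain ⟨Q, rfl⟩ : ∃ Q', Q = v ::ₘ Q' := by
    refine Multiset.exists_cons_of_mem ((Multiset.mem_cons.1 hv).resolve_left ?_)
    rintro rfl
    exact hk.asymm hvk
  obtain ⟨hlabu, hlabv, hlab⟩ : lab u.1 = lab u.2 ∧ lab v.1 = lab v.2 ∧
      ∀ x ∈ Q, lab x.1 = lab x.2 := by simpa only [Multiset.forall_mem_cons] using hP.lab_eq
  refine ⟨(p', u.2) ::ₘ (q', v.2) ::ₘ Q, ⟨?_, ?_⟩, ⟨k, fun j hj ↦ ?_, ?_⟩, ?_, ?_⟩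
  · simpa only [Multiset.forall_mem_cons] using ⟨hp'.trans hlabu, hq'.trans hlabv, hlab⟩
  · simpa only [Multiset.map_cons, Multiset.sum_cons, ← add_assoc, hrepu.add_eq_add hrepv]
      using hP.sum_eq
  · have hjs : j ≠ s := (hsk.trans hj).ne'
    simp [discrepancy, hrepu.apply_of_ne hjs (ne_of_gt hj), hrepv.apply_of_ne (ne_of_gt hj) hjs]
  · have hpk := hrepu.apply_target hsk.ne
    have hqk := hrepv.apply_source hsk.ne'
    simp only [Pi.toColex_apply, discrepancy, Multiset.map_cons, Multiset.sum_cons, Nat.dist]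
    omega
  · simp only [Multiset.map_cons, Multiset.prod_cons, ← mul_assoc, hf]
  · simp only [Multiset.map_cons, Multiset.prod_cons]

lemma exists_top_disagreement [Finite σ] [LinearOrder L] (lab : V → L)
    (hne : ∃ x ∈ P, mon x.1 ≠ mon x.2) :
    ∃ k, (∀ x ∈ P, ∀ j > k, mon x.1 j = mon x.2 j) ∧ ∃ u ∈ P, mon u.1 k ≠ mon u.2 k ∧
      ∀ x ∈ P, mon x.1 k ≠ mon x.2 k → lab u.1 ≤ lab x.1 := by
  have hdiff : {k | ∃ x ∈ P, mon x.1 k ≠ mon x.2 k}.Nonempty := by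
    obtain ⟨x, hx, hne⟩ := hne
    exact (DFunLike.ne_iff.1 hne).imp fun _ hk ↦ ⟨x, hx, hk⟩
  obtain ⟨k, ⟨x, hx, hxk⟩, hmax⟩ := Set.exists_max_image _ id (Set.toFinite _) hdiff
  have hfilter : P.filter (fun x ↦ mon x.1 k ≠ mon x.2 k) ≠ 0 := fun h ↦
    Multiset.eq_zero_iff_forall_notMem.1 h x (Multiset.mem_filter.2 ⟨hx, hxk⟩)
  obtain ⟨u, hu, hmin⟩ := Multiset.exists_min_image (fun x : V × V ↦ lab x.1) hfilter
  simp only [Multiset.mem_filter, and_imp] at hu hmin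
  refine ⟨k, fun x hx j hj ↦ ?_, u, hu.1, hu.2, hmin⟩
  by_contra hne
  exact (hmax j ⟨x, hx, hne⟩).not_gt hj

lemma Balanced.prod_eq_prod [Finite σ] [LinearOrder L] (hP : Balanced mon lab P)
    (hex : HasExchange mon lab f)
    (hinj : ∀ p q, lab p = lab q → mon p = mon q → f p = f q) :
    (P.map fun x ↦ f x.1).prod = (P.map fun x ↦ f x.2).prod := by
  induction hD : toColex (discrepancy mon P) using WellFoundedLT.induction generalizing P with
  | _ D ih =>
    by_cases hagree : ∀ x ∈ P, mon x.1 = mon x.2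
    · exact congrArg _ (Multiset.map_congr rfl fun x hx ↦ hinj _ _ (hP.lab_eq x hx) (hagree x hx))
    push Not at hagree
    obtain ⟨k, habove, u, hu, huk, hmin⟩ := exists_top_disagreement lab hagree
    rcases huk.lt_or_gt with huk | huk
    · obtain ⟨P', hP', hlt, hfst, hsnd⟩ := hP.exists_discrepancy_lt hex habove hu hmin huk
      rw [← hfst, ← hsnd]
      exact ih _ (hD ▸ hlt) hP' rfl
    · obtain ⟨P', hP', hlt, hfst, hsnd⟩ := hP.swap.exists_discrepancy_lt hex
        (Multiset.forall_mem_map_iff.2 fun x hx j hj ↦ (habove x hx j hj).symm)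
        (Multiset.mem_map_of_mem Prod.swap hu)
        (Multiset.forall_mem_map_iff.2 fun x hx hne ↦ by
          simpa only [Prod.fst_swap, hP.lab_eq u hu, hP.lab_eq x hx] using hmin x hx hne.symm) huk
      rw [discrepancy_swap, hD] at hlt
      simp only [Multiset.map_map, Function.comp_def, Prod.fst_swap, Prod.snd_swap] at hfst hsnd
      rw [← hfst, ← hsnd]
      exact (ih _ hlt hP' rfl).symm

lemma exists_pairing_of_map_eq {lab : V → L} {S S' : Multiset V} (h : S.map lab = S'.map lab) :
    ∃ P : Multiset (V × V), P.map Prod.fst = S ∧ P.map Prod.snd = S' ∧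
      ∀ x ∈ P, lab x.1 = lab x.2 := by
  rw [← Multiset.rel_eq, Multiset.rel_map] at h
  induction h with
  | zero => exact ⟨0, by simp⟩
  | @cons a b _ _ hab _ ih =>
    obtain ⟨P, rfl, rfl, hP⟩ := ih
    exact ⟨(a, b) ::ₘ P, by simp, by simp, Multiset.forall_mem_cons.2 ⟨hab, hP⟩⟩

theorem prod_map_eq_of_hasExchange [Finite σ] [LinearOrder L] (hex : HasExchange mon lab f)
    (hinj : ∀ p q, lab p = lab q → mon p = mon q → f p = f q) {S S' : Multiset V}
    (hlab : S.map lab = S'.map lab) (hmon : (S.map mon).sum = (S'.map mon).sum) :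
    (S.map f).prod = (S'.map f).prod := by
  obtain ⟨P, rfl, rfl, hP⟩ := exists_pairing_of_map_eq hlab
  simp only [Multiset.map_map, Function.comp_def] at hmon ⊢
  exact Balanced.prod_eq_prod ⟨hP, hmon⟩ hex hinj

end Straightening

section MonomialMap

open MvPolynomial

variable {R σ τ : Type*} [CommRing R]

lemma prod_map_monomial (w : σ → τ →₀ ℕ) (S : Multiset σ) :
    (S.map fun v ↦ monomial (w v) (1 : R)).prod = monomial (S.map w).sum 1 := by
  induction S using Multiset.induction_on with
  | empty => simp
  | cons a S ih => simp [ih, monomial_mul]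

lemma monomial_toFinsupp [DecidableEq σ] (S : Multiset σ) :
    monomial (Multiset.toFinsupp S) (1 : R) = (S.map X).prod := by
  conv_lhs => rw [← Multiset.sum_map_singleton S]
  simp only [map_multiset_sum, Multiset.map_map, Function.comp_def, Multiset.toFinsupp_singleton]
  exact (prod_map_monomial _ S).symm

theorem ker_aeval_monomial_le (w : σ → τ →₀ ℕ) (I : Ideal (MvPolynomial σ R))
    (h : ∀ S S' : Multiset σ, (S.map w).sum = (S'.map w).sum →
      (S.map fun v ↦ Ideal.Quotient.mk I (X v)).prod =
        (S'.map fun v ↦ Ideal.Quotient.mk I (X v)).prod) :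
    RingHom.ker (aeval fun v ↦ monomial (w v) (1 : R)) ≤ I := by
  classical
  set F : Multiset σ → MvPolynomial σ R ⧸ I :=
    fun S ↦ (S.map fun v ↦ Ideal.Quotient.mk I (X v)).prod with hF
  have hfactor : F.FactorsThrough fun S ↦ (S.map w).sum := fun S S' hS ↦ h S S' hS
  -- The quotient map factors through the monomial map along a linear map `ψ`.
  let ψ : MvPolynomial τ R →ₗ[R] MvPolynomial σ R ⧸ I :=
    (basisMonomials τ R).constr R (Function.extend (fun S ↦ (S.map w).sum) F 0)
  have hψ (S : Multiset σ) : ψ (monomial (S.map w).sum 1) = F S := by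
    rw [← hfactor.extend_apply 0 S]
    simpa using (basisMonomials τ R).constr_basis R
      (Function.extend (fun S ↦ (S.map w).sum) F 0) (S.map w).sum
  have hcomp : ψ ∘ₗ (aeval fun v ↦ monomial (w v) (1 : R)).toLinearMap =
      (Ideal.Quotient.mkₐ R I).toLinearMap := by
    refine (basisMonomials σ R).ext fun d ↦ ?_
    obtain ⟨S, rfl⟩ := Multiset.toFinsupp.surjective d
    simp only [coe_basisMonomials, LinearMap.comp_apply, AlgHom.toLinearMap_apply,
      monomial_toFinsupp, map_multiset_prod, Multiset.map_map, Function.comp_def, aeval_X,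
      prod_map_monomial, hψ]
    simp [hF]
  intro p hp
  have hψp := LinearMap.congr_fun hcomp p
  simp only [LinearMap.comp_apply, AlgHom.toLinearMap_apply, RingHom.mem_ker.1 hp,
    map_zero] at hψp
  exact Ideal.Quotient.eq_zero_iff_mem.1 hψp.symm

end MonomialMap

section Presentation

open MvPolynomial

variable {n r : ℕ} {E : Fin r → Set (Fin n)} {M : Fin r → (Fin n →₀ ℕ)}

/-- The label of a variable of the presentation: `i` for `T_{g,i}`, and `⊤` for `x_j`. The
variables `x_j` thus play the role of the generators of one more, last ideal. -/
def label : Fin n ⊕ TVar n r E M → WithTop (Fin r)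
  | .inl _ => ⊤
  | .inr v => v.1

/-- The exponent vector in `x_1, …, x_n` of the image of a variable of the presentation. -/
noncomputable def exponent : Fin n ⊕ TVar n r E M → Fin n →₀ ℕ
  | .inl j => Finsupp.single j 1
  | .inr v => v.2.1

/-- The sets `E_i`, extended by all variables at the label `⊤`. -/
def moveSet (E : Fin r → Set (Fin n)) : WithTop (Fin r) → Set (Fin n)
  | ⊤ => Set.univ
  | (i : Fin r) => E i

/-- The generating sets `G_i`, extended by `{x_1, …, x_n}` at the label `⊤`. -/
def genSet (E : Fin r → Set (Fin n)) (M : Fin r → (Fin n →₀ ℕ)) :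
    WithTop (Fin r) → Set (Fin n →₀ ℕ)
  | ⊤ => Set.range fun j ↦ Finsupp.single j 1
  | (i : Fin r) => LBorelSet n (E i) (M i)

/-- The common degree of the elements of `genSet E M l`. -/
noncomputable def genDegree (M : Fin r → (Fin n →₀ ℕ)) : WithTop (Fin r) → ℕ
  | ⊤ => 1
  | (i : Fin r) => (M i).degree

lemma borelExchange_genSet (l : WithTop (Fin r)) :
    BorelExchange (moveSet E l) (genSet E M l) :=
  match l with
  | ⊤ => borelExchange_variables
  | (i : Fin r) => borelExchange_LBorelSet (E i) (M i)

lemma exponent_mem_genSet (p : Fin n ⊕ TVar n r E M) : exponent p ∈ genSet E M (label p) :=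
  match p with
  | .inl j => ⟨j, rfl⟩
  | .inr v => v.2.2

lemma exists_label_eq_exponent_eq {l : WithTop (Fin r)} {g : Fin n →₀ ℕ} (hg : g ∈ genSet E M l) :
    ∃ p : Fin n ⊕ TVar n r E M, label p = l ∧ exponent p = g :=
  match l, hg with
  | ⊤, ⟨j, hj⟩ => ⟨.inl j, rfl, hj⟩
  | (i : Fin r), hg => ⟨.inr ⟨i, g, hg⟩, rfl, rfl⟩

lemma degree_exponent (p : Fin n ⊕ TVar n r E M) :
    (exponent p).degree = genDegree M (label p) :=
  match p with
  | .inl j => Finsupp.degree_single j 1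
  | .inr v => (borelDominated_of_mem_LBorelSet v.2.2).degree_eq

lemma eq_of_label_eq_of_exponent_eq {p q : Fin n ⊕ TVar n r E M} (hl : label p = label q)
    (he : exponent p = exponent q) : p = q := by
  rcases p with j | ⟨i, g⟩ <;> rcases q with j' | ⟨i', g'⟩
  · exact congrArg Sum.inl (Finsupp.single_left_injective one_ne_zero he)
  · exact absurd hl (WithTop.top_ne_coe)
  · exact absurd hl (WithTop.coe_ne_top)
  · obtain rfl := WithTop.coe_injective hl
    obtain rfl := Subtype.ext he
    rfl

lemma mem_moveSet_of_lt
    (hLfree : ∀ (h j : Fin n) (u v : Fin r), h < j → u < v →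
      h ∈ E u → j ∈ E u → j ∈ E v → h ∈ E v)
    {l m : WithTop (Fin r)} (hlm : l ≤ m) {s k : Fin n} (hsk : s < k) (hs : s ∈ moveSet E l)
    (hkl : k ∈ moveSet E l) (hkm : k ∈ moveSet E m) : s ∈ moveSet E m := by
  obtain rfl | hlm := hlm.eq_or_lt
  · exact hs
  match l, m with
  | _, ⊤ => exact Set.mem_univ s
  | (u : Fin r), (v : Fin r) => exact hLfree s k u v hsk (WithTop.coe_lt_coe.1 hlm) hs hkl hkm

/-- The ideal generated by the quadrics of symmetric and of fiber type. -/
noncomputable def quadricIdeal (K : Type*) [Field K] (E : Fin r → Set (Fin n))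
    (M : Fin r → (Fin n →₀ ℕ)) : Ideal (MvPolynomial (Fin n ⊕ TVar n r E M) K) :=
  Ideal.span (symQuadrics K n r E M ∪ prinQuadrics K n r E M ∪ biQuadrics K n r E M)

variable {K : Type*} [Field K]

/-- Up to sign, the difference is a quadric of symmetric type if only `q` is an `x_j` and of fiber
type if neither `p` nor `q` is; it vanishes if both are. -/
lemma mul_sub_mul_mem_quadricIdeal {p p' q q' : Fin n ⊕ TVar n r E M} {s k : Fin n} (hsk : s < k)
    (hp : label p' = label p) (hq : label q' = label q) (hpq : label p ≤ label q)
    (hsp : s ∈ moveSet E (label p)) (hkp : k ∈ moveSet E (label p))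
    (hsq : s ∈ moveSet E (label q)) (hkq : k ∈ moveSet E (label q))
    (hrepp : IsReplacement s k (exponent p) (exponent p'))
    (hrepq : IsReplacement k s (exponent q) (exponent q')) :
    (X p * X q - X p' * X q' : MvPolynomial (Fin n ⊕ TVar n r E M) K) ∈ quadricIdeal K E M := by
  have hpos_p := hrepp.apply_source hsk.ne
  have hpos_p' := hrepp.apply_target hsk.ne
  have hpos_q := hrepq.apply_source hsk.ne'
  have hpos_q' := hrepq.apply_target hsk.ne'
  match p, p', q, q' with
  | .inl _, .inl _, .inl _, .inl _ =>
    obtain ⟨rfl, rfl⟩ := hrepp.eq_of_single hsk.ne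
    obtain ⟨rfl, rfl⟩ := hrepq.eq_of_single hsk.ne'
    rw [mul_comm, sub_self]
    exact zero_mem _
  | .inr ⟨i, g⟩, .inr ⟨i', g'⟩, .inl j, .inl j' =>
    obtain rfl : i = i' := (WithTop.coe_injective hp).symm
    obtain ⟨rfl, rfl⟩ := hrepq.eq_of_single hsk.ne'
    have hquadric : (X (.inl j') * X (.inr ⟨i, g'⟩) - X (.inl j) * X (.inr ⟨i, g⟩) :
        MvPolynomial (Fin n ⊕ TVar n r E M) K) ∈ quadricIdeal K E M :=
      Ideal.subset_span (.inl (.inl ⟨i, g', g, j', j, hsk, hsp, hkp,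
        hpos_p' ▸ Nat.succ_pos _, hrepp.symm, rfl⟩))
    convert neg_mem hquadric using 1
    ring
  | .inr ⟨i, g⟩, .inr ⟨i', g'⟩, .inr ⟨j, h⟩, .inr ⟨j', h'⟩ =>
    obtain rfl : i = i' := (WithTop.coe_injective hp).symm
    obtain rfl : j = j' := (WithTop.coe_injective hq).symm
    obtain hij | hij := (WithTop.coe_le_coe.1 hpq).eq_or_lt
    · obtain rfl : i = j := hij
      rw [← neg_mem_iff, neg_sub]
      exact Ideal.subset_span (.inl (.inr ⟨i, g', h', g, h, s, k, hsk, hsp, hkp,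
        hpos_p' ▸ Nat.succ_pos _, hpos_q' ▸ Nat.succ_pos _, hrepp.symm, hrepq.symm, rfl⟩))
    · exact Ideal.subset_span (.inr ⟨i, j, hij, g, g', h, h', s, k, hsk, hsp, hkp, hsq, hkq,
        hpos_p ▸ Nat.succ_pos _, hpos_q ▸ Nat.succ_pos _, hrepp, hrepq, rfl⟩)

theorem hasExchange_quadricIdeal
    (hLfree : ∀ (h j : Fin n) (u v : Fin r), h < j → u < v →
      h ∈ E u → j ∈ E u → j ∈ E v → h ∈ E v) :
    HasExchange (exponent (E := E) (M := M)) label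
      fun p ↦ Ideal.Quotient.mk (quadricIdeal K E M) (X p) := by
  intro p p₀ q q₀ k hp hq hpq habove hpk hqk
  have hGp := borelExchange_genSet (E := E) (M := M) (label p)
  have hGq := borelExchange_genSet (E := E) (M := M) (label q)
  have hp₀ : exponent p₀ ∈ genSet E M (label p) := hp ▸ exponent_mem_genSet p₀
  have hq₀ : exponent q₀ ∈ genSet E M (label q) := hq ▸ exponent_mem_genSet q₀
  have hkp := hGp.mem_of_ne (exponent_mem_genSet p) hp₀ hpk.ne
  have hkq := hGq.mem_of_ne (exponent_mem_genSet q) hq₀ hqk.ne'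
  obtain ⟨s, hsk, hsp, g', hg', hrepp⟩ :=
    hGp.exists_raise (exponent_mem_genSet p) hp₀ habove hpk
  have hsq := mem_moveSet_of_lt hLfree hpq hsk hsp hkp hkq
  obtain ⟨h', hh', hrepq⟩ :=
    hGq.exists_lower (exponent_mem_genSet q) hsk hsq hkq (Nat.zero_lt_of_lt hqk)
  obtain ⟨p', hp', rfl⟩ := exists_label_eq_exponent_eq hg'
  obtain ⟨q', hq', rfl⟩ := exists_label_eq_exponent_eq hh'
  refine ⟨s, hsk, p', q', hp', hq', hrepp, hrepq, ?_⟩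
  rw [← map_mul, ← map_mul]
  exact Ideal.Quotient.eq.2
    (mul_sub_mul_mem_quadricIdeal hsk hp' hq' hpq hsp hkp hsq hkq hrepp hrepq)

/-- The exponent vector of `t_i`, respectively of `1` for the label `⊤`. -/
noncomputable def tExponent : WithTop (Fin r) → Fin n ⊕ Fin r →₀ ℕ
  | ⊤ => 0
  | (i : Fin r) => Finsupp.single (Sum.inr i) 1

/-- The exponent vector of the monomial to which a variable of the presentation is sent. -/
noncomputable def weight (p : Fin n ⊕ TVar n r E M) : Fin n ⊕ Fin r →₀ ℕ :=
  Finsupp.mapDomain Sum.inl (exponent p) + tExponent (label p)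

lemma presentation_eq_aeval_weight :
    (aeval (Sum.elim (fun j : Fin n ↦ X (Sum.inl j)) fun v : TVar n r E M ↦
      monomial (Finsupp.mapDomain Sum.inl v.2.1 + Finsupp.single (Sum.inr v.1) 1) (1 : K)) :
        MvPolynomial (Fin n ⊕ TVar n r E M) K →ₐ[K] MvPolynomial (Fin n ⊕ Fin r) K) =
      aeval fun p ↦ monomial (weight p) 1 := by
  congr 1
  funext p
  match p with
  | .inl j => simp [weight, exponent, label, tExponent, X]
  | .inr v => rfl

lemma weight_inl (p : Fin n ⊕ TVar n r E M) (j : Fin n) :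
    weight p (Sum.inl j) = exponent p j := by
  have htExp : (tExponent (label p) : Fin n ⊕ Fin r →₀ ℕ) (Sum.inl j) = 0 := by
    match label p with
    | ⊤ => rfl
    | (i : Fin r) => simp [tExponent]
  simp [weight, htExp, Finsupp.mapDomain_apply Sum.inl_injective]

lemma weight_inr (p : Fin n ⊕ TVar n r E M) (i : Fin r) :
    weight p (Sum.inr i) = if (i : WithTop (Fin r)) = label p then 1 else 0 := by
  rw [weight, Finsupp.add_apply, Finsupp.mapDomain_of_notMem_range _ _ (by simp), zero_add]
  match label p with
  | ⊤ => simp [tExponent]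
  | (i' : Fin r) => simp [tExponent, Finsupp.single_apply, eq_comm]

lemma weight_add_weight_eq {p p' q q' : Fin n ⊕ TVar n r E M} (hp : label p' = label p)
    (hq : label q' = label q) (h : exponent p' + exponent q' = exponent p + exponent q) :
    weight p' + weight q' = weight p + weight q := by
  simp only [weight, hp, hq, add_add_add_comm _ (tExponent _), ← Finsupp.mapDomain_add, h]

lemma sum_exponent_eq_of_sum_weight_eq {S S' : Multiset (Fin n ⊕ TVar n r E M)}
    (h : (S.map weight).sum = (S'.map weight).sum) :
    (S.map exponent).sum = (S'.map exponent).sum := by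
  ext j
  simpa only [sum_map_apply, weight_inl] using DFunLike.congr_fun h (Sum.inl j)

/-- The exponents of `t_1, …, t_r` count the labels other than `⊤`, and the total degree then
counts `⊤`. -/
lemma map_label_eq_of_sum_weight_eq {S S' : Multiset (Fin n ⊕ TVar n r E M)}
    (h : (S.map weight).sum = (S'.map weight).sum) : S.map label = S'.map label := by
  have hdegree (T : Multiset (Fin n ⊕ TVar n r E M)) :
      ((T.map label).map (genDegree M)).sum = (T.map exponent).sum.degree := by
    simp only [map_multiset_sum, Multiset.map_map, Function.comp_def, degree_exponent]
  have hcount (T : Multiset (Fin n ⊕ TVar n r E M)) (i : Fin r) :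
      (T.map label).count (i : WithTop (Fin r)) = (T.map weight).sum (Sum.inr i) := by
    simp only [sum_map_apply, weight_inr, count_map_eq_sum]
  refine eq_of_count_eq_of_sum_map_eq (δ := genDegree M) (a := ⊤) one_ne_zero ?_ ?_
  · intro l hl
    lift l to Fin r using hl
    rw [hcount, hcount, h]
  · rw [hdegree, hdegree, sum_exponent_eq_of_sum_weight_eq h]

theorem quadricIdeal_le_ker :
    quadricIdeal K E M ≤ RingHom.ker
      (aeval fun p ↦ monomial (weight p) (1 : K) :
        MvPolynomial (Fin n ⊕ TVar n r E M) K →ₐ[K] MvPolynomial (Fin n ⊕ Fin r) K) := by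
  rw [quadricIdeal, Ideal.span_le]
  have hker {p q p' q' : Fin n ⊕ TVar n r E M} (hp : label p' = label p) (hq : label q' = label q)
      (h : exponent p' + exponent q' = exponent p + exponent q) :
      aeval (fun p ↦ monomial (weight p) (1 : K))
        (X p * X q - X p' * X q' : MvPolynomial (Fin n ⊕ TVar n r E M) K) = 0 := by
    simp only [map_sub, map_mul, aeval_X, monomial_mul, weight_add_weight_eq hp hq h, sub_self]
  rintro _ ((⟨i, g, g', s, u, -, -, -, -, hrep, rfl⟩ |
    ⟨i, g, h, g', h', s, u, -, -, -, -, -, hg, hh, rfl⟩) |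
    ⟨i, j, -, g, g', h, h', s, u, -, -, -, -, -, -, -, hg, hh, rfl⟩)
  · exact hker rfl rfl ((add_comm _ _).trans (Eq.trans hrep (add_comm _ _)))
  · exact hker rfl rfl (IsReplacement.add_eq_add hg hh)
  · exact hker rfl rfl (IsReplacement.add_eq_add hg hh)

end Presentation

end MultiRees

open MvPolynomial MultiRees in
theorem multiRees_kernel_generated_by_quadrics_general
    (K : Type*) [Field K] {n r : ℕ}
    (E : Fin r → Set (Fin n)) (M : Fin r → (Fin n →₀ ℕ))
    (hLfree : ∀ (h j : Fin n) (u v : Fin r), h < j → u < v →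
      h ∈ E u → j ∈ E u → j ∈ E v → h ∈ E v)
    (φ : MvPolynomial (Fin n ⊕ TVar n r E M) K →ₐ[K] MvPolynomial (Fin n ⊕ Fin r) K)
    (hφ : φ = aeval (Sum.elim (fun j : Fin n ↦ X (Sum.inl j)) fun v : TVar n r E M ↦
      monomial (Finsupp.mapDomain Sum.inl v.2.1 + Finsupp.single (Sum.inr v.1) 1) (1 : K))) :
    Ideal.span (symQuadrics K n r E M ∪ prinQuadrics K n r E M ∪ biQuadrics K n r E M) =
      RingHom.ker φ := by
  rw [hφ, presentation_eq_aeval_weight]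
  refine le_antisymm quadricIdeal_le_ker (ker_aeval_monomial_le weight _ fun S S' hweight ↦ ?_)
  have hlabel : S.map label = S'.map label := map_label_eq_of_sum_weight_eq hweight
  have hexponent : (S.map exponent).sum = (S'.map exponent).sum :=
    sum_exponent_eq_of_sum_weight_eq hweight
  exact prod_map_eq_of_hasExchange (hasExchange_quadricIdeal hLfree)
    (fun p q hl he ↦ by rw [eq_of_label_eq_of_exponent_eq hl he]) hlabel hexponent

/-- Theorem 6.8 (generation): let `I_i` be the principal `L_{E_i}`-Borel ideal generated
by `M_i`, where `E_i` is the set of essential variables of `I_i` and every variable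
dividing `M_i` lies in `E_i`, and suppose the ordering `I_1,…,I_r` is `𝖫`-free.  Then
the kernel of the presentation `φ` of the multi-Rees algebra (`φ(x_j) = x_j`,
`φ(T_{g,i}) = g·t_i`) is generated by the quadrics of symmetric and fiber
(principal and bi-principal) type. -/
theorem multiRees_kernel_generated_by_quadrics
    (K : Type*) [Field K] {n r : ℕ}
    (E : Fin r → Set (Fin n)) (M : Fin r → (Fin n →₀ ℕ))
    (hEss : ∀ i : Fin r, E i = {j : Fin n |
      (∃ g ∈ LBorelSet n (E i) (M i), 0 < g j) ∧
      ∃ g ∈ LBorelSet n (E i) (M i), ∃ g' ∈ LBorelSet n (E i) (M i), g j ≠ g' j})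
    (hsupp : ∀ (i : Fin r) (j : Fin n), 0 < M i j → j ∈ E i)
    (hLfree : ∀ (h j : Fin n) (u v : Fin r), h < j → u < v →
      h ∈ E u → j ∈ E u → j ∈ E v → h ∈ E v)
    (φ : MvPolynomial (Fin n ⊕ TVar n r E M) K →ₐ[K] MvPolynomial (Fin n ⊕ Fin r) K)
    (hφ : φ = MvPolynomial.aeval (Sum.elim
      (fun j : Fin n => MvPolynomial.X (Sum.inl j))
      (fun v : TVar n r E M => MvPolynomial.monomial
        (Finsupp.mapDomain Sum.inl v.2.1 + Finsupp.single (Sum.inr v.1) 1) (1 : K)))) :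
    Ideal.span (symQuadrics K n r E M ∪ prinQuadrics K n r E M ∪ biQuadrics K n r E M) =
      RingHom.ker φ := by
  exact multiRees_kernel_generated_by_quadrics_general K E M hLfree φ hφ
end

section
/- Let I_1,…,I_r be principal L-Borel ideals in K[x_1,…,x_n] (I_i is the principal L_{U_i}-Borel ideal generated by a monomial M_i for some subset U_i of the variables) and suppose the collection admits an L-free ordering with respect to its essential variable sets. Then the multi-Rees algebra R[I_1t_1,…,I_rt_r] and the multi-fiber ring K[I_1t_1,…,I_rt_r] are normal domains: each is an integral domain that is integrally closed in its field of fractions. -/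
/-- The multi-Rees algebra `R[I_1t_1,…,I_rt_r]` of monomial ideals with minimal
generating sets `G_1,…,G_r`: the `K`-subalgebra of `K[x_1,…,x_n,t_1,…,t_r]` generated
by `x_1,…,x_n` together with all `g·t_i`, `g ∈ G_i`. -/
noncomputable def multiRees (K : Type*) [Field K] (n r : ℕ) (G : Fin r → Set (Fin n →₀ ℕ)) :
    Subalgebra K (MvPolynomial (Fin n ⊕ Fin r) K) :=
  Algebra.adjoin K
    ((Set.range fun i : Fin n => (MvPolynomial.X (Sum.inl i) :
        MvPolynomial (Fin n ⊕ Fin r) K)) ∪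
      {p | ∃ i : Fin r, ∃ g ∈ G i,
        p = MvPolynomial.monomial
          (Finsupp.mapDomain Sum.inl g + Finsupp.single (Sum.inr i) 1) (1 : K)})

/-- The multi-fiber ring `K[I_1t_1,…,I_rt_r]`: the `K`-subalgebra of
`K[x_1,…,x_n,t_1,…,t_r]` generated by all `g·t_i`, `g ∈ G_i`. -/
noncomputable def multiFiber (K : Type*) [Field K] (n r : ℕ) (G : Fin r → Set (Fin n →₀ ℕ)) :
    Subalgebra K (MvPolynomial (Fin n ⊕ Fin r) K) :=
  Algebra.adjoin K
    {p | ∃ i : Fin r, ∃ g ∈ G i,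
      p = MvPolynomial.monomial
        (Finsupp.mapDomain Sum.inl g + Finsupp.single (Sum.inr i) 1) (1 : K)}

/-!
Applying `L_U`-Borel moves to a monomial amounts to replacing each of its factors `x_j`
independently by a variable from the slot `{x_j} ∪ {x_h ∈ U | h < j}` (only `{x_j}` if `x_j ∉ U`),
so an `L_U`-Borel set consists of the bases of a transversal polymatroid. By Hall's marriage
theorem, the exponent semigroup of the multi-Rees algebra of such sets is therefore cut out by
integral linear inequalities, and that of the multi-fiber ring by one further inequality on degrees.
Each inequality says that a monomial valuation is nonnegative, which is preserved under passing to
integral elements of the polynomial ring; the polynomial ring itself is integrally closed.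
-/

open MvPolynomial Finsupp

section WeightValuation

variable {σ R Γ : Type*} [CommRing R] [AddCommGroup Γ] [LinearOrder Γ] [IsOrderedAddMonoid Γ]

/-- The homomorphism `x_i ↦ x_i T^{c i}`, which records the `c`-weight of each term in the exponent
of `T`. Keeping `x_i` in the coefficient prevents terms of equal weight from cancelling. -/
noncomputable def weightGradingHom (R : Type*) [CommRing R] (c : σ → Γ) :
    MvPolynomial σ R →ₐ[R] HahnSeries Γ (MvPolynomial σ R) :=
  aeval fun i => HahnSeries.single (c i) (X i)

lemma weightGradingHom_monomial (c : σ → Γ) (w : σ →₀ ℕ) (a : R) :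
    weightGradingHom R c (monomial w a) = HahnSeries.single (weight c w) (monomial w a) := by
  have hprod : w.prod (fun i k => HahnSeries.single (c i) (X i : MvPolynomial σ R) ^ k) =
      HahnSeries.single (weight c w) (monomial w 1) := by
    induction w using Finsupp.induction_linear with
    | zero => simp
    | add v w hv hw =>
      rw [prod_add_index' (by simp) (by simp [pow_add]), hv, hw, HahnSeries.single_mul_single,
        monomial_mul, map_add, one_mul]
    | single i k => simp [HahnSeries.single_pow, X_pow_eq_monomial, weight_single]
  rw [weightGradingHom, aeval_monomial, hprod, HahnSeries.algebraMap_apply, HahnSeries.C_apply,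
    HahnSeries.single_mul_single, zero_add, algebraMap_eq, C_mul_monomial, mul_one]

lemma coeff_coeff_weightGradingHom [DecidableEq Γ] (c : σ → Γ) (f : MvPolynomial σ R)
    (γ : Γ) (w : σ →₀ ℕ) :
    coeff w ((weightGradingHom R c f).coeff γ) = if γ = weight c w then coeff w f else 0 := by
  classical
  induction f using MvPolynomial.induction_on' with
  | monomial u a =>
    rw [weightGradingHom_monomial, HahnSeries.coeff_single, coeff_monomial]
    rcases eq_or_ne u w with rfl | h <;> simp [apply_ite (coeff _), *]
  | add f g hf hg =>
    rw [map_add, HahnSeries.coeff_add, coeff_add, hf, hg, coeff_add, ite_add_zero]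

variable [IsDomain R]

/-- The monomial valuation sending `f` to the least `c`-weight of a term of `f`. -/
noncomputable def weightValuation (R : Type*) [CommRing R] [IsDomain R] (c : σ → Γ) :
    AddValuation (MvPolynomial σ R) (WithTop Γ) :=
  (HahnSeries.addVal Γ (MvPolynomial σ R)).comap (weightGradingHom R c).toRingHom

lemma zero_le_weightValuation_iff {c : σ → Γ} {f : MvPolynomial σ R} :
    0 ≤ weightValuation R c f ↔ ∀ w ∈ f.support, 0 ≤ weight c w := by
  classical
  have hval : weightValuation R c f = (weightGradingHom R c f).orderTop := HahnSeries.addVal_apply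
  rw [hval, HahnSeries.le_orderTop_iff_forall]
  simp only [MvPolynomial.ext_iff, coeff_coeff_weightGradingHom, coeff_zero,
    MvPolynomial.mem_support_iff, ite_eq_right_iff, WithTop.coe_lt_zero]
  refine ⟨fun h w hw => ?_, fun h γ hγ w hw => ?_⟩
  · by_contra! hneg
    exact hw (h _ hneg w rfl)
  · by_contra hne
    exact (h w hne).not_gt (hw ▸ hγ)

end WeightValuation

section SemigroupAlgebra

lemma isIntegrallyClosedIn_valuation_integer {A Γ₀ : Type*} [CommRing A]
    [LinearOrderedCommGroupWithZero Γ₀] (v : Valuation A Γ₀) :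
    IsIntegrallyClosedIn v.integer A :=
  Subring.isIntegrallyClosedIn_iff.2 fun _ hx => (Valuation.integer.integers v).mem_of_integral hx

variable {σ R Γ : Type*}

lemma weight_nonneg_of_mem_closure [AddCommMonoid Γ] [PartialOrder Γ] [IsOrderedAddMonoid Γ]
    {c : σ → Γ} {W : Set (σ →₀ ℕ)} (hW : ∀ w ∈ W, 0 ≤ weight c w) {w : σ →₀ ℕ}
    (hw : w ∈ AddSubmonoid.closure W) : 0 ≤ weight c w := by
  have hle : AddSubmonoid.closure W ≤ (AddSubmonoid.nonneg Γ).comap (weight c) :=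
    AddSubmonoid.closure_le.2 hW
  exact hle hw

variable [CommRing R]

lemma mem_adjoin_monomial_iff {W : Set (σ →₀ ℕ)} {f : MvPolynomial σ R} :
    f ∈ Algebra.adjoin R ((monomial · (1 : R)) '' W) ↔
      (f.support : Set (σ →₀ ℕ)) ⊆ AddSubmonoid.closure W := by
  have hclosure : (Submonoid.closure ((monomial · (1 : R)) '' W) : Set (MvPolynomial σ R)) =
      (monomial · 1) '' (AddSubmonoid.closure W : Set (σ →₀ ℕ)) := by
    have hmap := MonoidHom.map_mclosure (monomialOneHom R σ) (Multiplicative.toAdd ⁻¹' W)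
    rw [← AddSubmonoid.toSubmonoid_closure] at hmap
    exact congrArg SetLike.coe hmap.symm
  rw [← mem_restrictSupport_iff, restrictSupport_eq_span, ← hclosure, ← Algebra.adjoin_eq_span,
    Subalgebra.mem_toSubmodule]

variable [IsDomain R] [AddCommGroup Γ] [LinearOrder Γ] [IsOrderedAddMonoid Γ]

theorem isIntegrallyClosedIn_adjoin_monomial {W : Set (σ →₀ ℕ)} (C : Set (σ → Γ))
    (hWC : ∀ w, w ∈ AddSubmonoid.closure W ↔ ∀ c ∈ C, 0 ≤ weight c w) :
    IsIntegrallyClosedIn (Algebra.adjoin R ((monomial · (1 : R)) '' W)) (MvPolynomial σ R) := by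
  refine Subring.isIntegrallyClosedIn_iff.2 fun f hf => mem_adjoin_monomial_iff.2 fun w hw =>
    (hWC w).2 fun c hc => ?_
  let v := AddValuation.toValuation (weightValuation R c)
  have hmem (g : MvPolynomial σ R) : g ∈ v.integer ↔ ∀ u ∈ g.support, 0 ≤ weight c u :=
    zero_le_weightValuation_iff
  have := isIntegrallyClosedIn_valuation_integer v
  have hle : Subring.ofClass (Algebra.adjoin R ((monomial · (1 : R)) '' W)) ≤ v.integer :=
    fun g hg => (hmem g).2 fun u hu => (hWC u).1 (mem_adjoin_monomial_iff.1 hg hu) c hc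
  exact (hmem f).1 (Subring.integralClosure_subring_le_iff.2 hle hf) w hw

end SemigroupAlgebra

section Transversal

variable {σ τ : Type*} [Fintype τ]

theorem exists_forall_mem_sum_single_le [DecidableEq σ] (A : τ → Finset σ) (b : τ → ℕ)
    (a : σ →₀ ℕ) (hHall : ∀ T : Finset τ, ∑ x ∈ T, b x ≤ ∑ h ∈ T.biUnion A, a h) :
    ∃ p : (x : τ) → Fin (b x) → σ, (∀ x k, p x k ∈ A x) ∧ ∑ x, ∑ k, single (p x k) 1 ≤ a := by
  classical
  let N (s : Σ x, Fin (b x)) : Finset (Σ h, Fin (a h)) := (A s.1).sigma fun _ => Finset.univ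
  obtain ⟨φ, hφ_inj, hφ_mem⟩ :=
    (Finset.all_card_le_biUnion_card_iff_exists_injective N).1 fun S => by
      let T := S.image Sigma.fst
      calc S.card
        _ ≤ (T.sigma fun x => (Finset.univ : Finset (Fin (b x)))).card :=
          Finset.card_le_card fun s hs =>
            Finset.mem_sigma.2 ⟨Finset.mem_image_of_mem _ hs, Finset.mem_univ _⟩
        _ = ∑ x ∈ T, b x := by simp
        _ ≤ ∑ h ∈ T.biUnion A, a h := hHall T
        _ = ((T.biUnion A).sigma fun h => (Finset.univ : Finset (Fin (a h)))).card := by simp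
        _ = (S.biUnion N).card := by
          congr 1
          ext ⟨h, k⟩
          simp [T, N]
  refine ⟨fun x k => (φ ⟨x, k⟩).1, fun x k => ?_, fun h => ?_⟩
  · exact (Finset.mem_sigma.1 (hφ_mem ⟨x, k⟩)).1
  · calc (∑ x, ∑ k, single (φ ⟨x, k⟩).1 1 : σ →₀ ℕ) h
      _ = (Finset.univ.filter fun s => (φ s).1 = h).card := by
        rw [Finset.card_filter, Fintype.sum_sigma]
        simp only [finsetSum_apply, single_apply]
      _ ≤ (({h} : Finset σ).sigma fun h => (Finset.univ : Finset (Fin (a h)))).card :=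
        Finset.card_le_card_of_injOn φ (by simp [Set.MapsTo]) hφ_inj.injOn
      _ = a h := by simp

/-- The exponents of the generators `∏ x, X (p x)`, `p x ∈ A x`, of a product of monomial prime
ideals `⟨X h | h ∈ A x⟩`: the bases of a transversal polymatroid. -/
def transversalSet (A : τ → Finset σ) : Set (σ →₀ ℕ) :=
  {g | ∃ p : τ → σ, (∀ x, p x ∈ A x) ∧ ∑ x, single (p x) 1 = g}

lemma mem_transversalSet_of_exchange {A : τ → Finset σ} {g g' : σ →₀ ℕ} {i j : σ}
    (hg : g ∈ transversalSet A) (hj : 0 < g j) (hA : ∀ x, j ∈ A x → i ∈ A x)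
    (hg' : g' + single j 1 = g + single i 1) : g' ∈ transversalSet A := by
  classical
  obtain ⟨p, hp, rfl⟩ := hg
  obtain ⟨x, rfl⟩ : ∃ x, p x = j := by
    by_contra! hne
    simp [hne] at hj
  refine ⟨Function.update p x i, fun y => ?_, add_right_cancel (Eq.trans ?_ hg'.symm)⟩
  · rcases eq_or_ne y x with rfl | hyx
    · simpa using hA y (hp y)
    · simpa [hyx] using hp y
  · have herase : ∑ y ∈ Finset.univ.erase x, single (Function.update p x i y) 1 =
        ∑ y ∈ Finset.univ.erase x, single (p y) 1 :=
      Finset.sum_congr rfl fun y hy => by rw [Function.update_of_ne (Finset.ne_of_mem_erase hy)]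
    rw [← Finset.add_sum_erase _ _ (Finset.mem_univ x), Function.update_self, herase,
      ← Finset.add_sum_erase _ (fun y => single (p y) 1) (Finset.mem_univ x)]
    abel

end Transversal

section MultiReesSemigroup

variable {σ ι : Type*} {τ : ι → Type*}

/-- The exponents of the generators `x^g t_i`, `g ∈ G i`, of the multi-fiber ring of a family of
monomial ideals; `Sum.inl` indexes the variables `x` and `Sum.inr` the variables `t`. -/
def multiFiberExponents (G : ι → Set (σ →₀ ℕ)) : Set (σ ⊕ ι →₀ ℕ) :=
  {w | ∃ i, ∃ g ∈ G i, sumElim g (single i 1) = w}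

/-- The exponents of the generators of the multi-Rees algebra of a family of monomial ideals:
those of the multi-fiber ring together with the variables `x`. -/
def multiReesExponents (G : ι → Set (σ →₀ ℕ)) : Set (σ ⊕ ι →₀ ℕ) :=
  Set.range (fun h => single (Sum.inl h) 1) ∪ multiFiberExponents G

lemma weight_sumElim {Γ : Type*} [AddCommMonoid Γ] (c : σ ⊕ ι → Γ) (a : σ →₀ ℕ) (b : ι →₀ ℕ) :
    weight c (sumElim a b) = weight (c ∘ Sum.inl) a + weight (c ∘ Sum.inr) b := by
  simp [sumElim_eq_add, weight_apply, sum_add_index', add_smul, sum_mapDomain_index]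

lemma sumElim_zero_mem_closure_multiReesExponents (G : ι → Set (σ →₀ ℕ)) (d : σ →₀ ℕ) :
    sumElim d 0 ∈ AddSubmonoid.closure (multiReesExponents G) := by
  induction d using Finsupp.induction_linear with
  | zero => simp
  | add d e hd he => simpa [← sumElim_add] using add_mem hd he
  | single h k =>
    have hX : single (Sum.inl h) 1 ∈ multiReesExponents G := Or.inl ⟨h, rfl⟩
    simpa using nsmul_mem (AddSubmonoid.subset_closure hX) k

variable [∀ i, Fintype (τ i)]

/-- The weight whose nonnegativity on `(a, b)` says `deg a ≤ ∑ i, b i * card (τ i)`: each generator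
of the `i`-th ideal has degree `card (τ i)`. -/
def degreeWeight (τ : ι → Type*) [∀ i, Fintype (τ i)] : σ ⊕ ι → ℤ :=
  Sum.elim (fun _ => -1) fun i => Fintype.card (τ i)

lemma weight_degreeWeight_of_mem {w : σ ⊕ ι →₀ ℕ} {A : (i : ι) → τ i → Finset σ}
    (hw : w ∈ multiFiberExponents fun i => transversalSet (A i)) :
    weight (degreeWeight τ) w = 0 := by
  obtain ⟨i, _, ⟨p, -, rfl⟩, rfl⟩ := hw
  simp [weight_sumElim, weight_single, degreeWeight]

lemma weight_degreeWeight_sumElim_zero (d : σ →₀ ℕ) :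
    weight (degreeWeight τ) (sumElim d 0) = -(d.degree : ℤ) := by
  rw [weight_sumElim, map_zero, add_zero]
  simp [degreeWeight, weight_apply, degree_apply, Finsupp.sum]

variable [DecidableEq σ] [DecidableEq ι] [∀ i, DecidableEq (τ i)]

/-- The weight whose nonnegativity on `(a, b)` is Hall's condition
`∑ ⟨i, x⟩ ∈ T, b i ≤ ∑ h ∈ ⋃_T A i x, a h` for the set `T` of slots. -/
def hallWeight (A : (i : ι) → τ i → Finset σ) (T : Finset (Σ i, τ i)) : σ ⊕ ι → ℤ :=
  Sum.elim (fun h => if h ∈ T.biUnion fun s => A s.1 s.2 then 1 else 0)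
    fun i => -∑ x, if ⟨i, x⟩ ∈ T then 1 else 0

variable {A : (i : ι) → τ i → Finset σ}

lemma weight_hallWeight_nonneg_of_mem {T : Finset (Σ i, τ i)} {w : σ ⊕ ι →₀ ℕ}
    (hw : w ∈ multiReesExponents fun i => transversalSet (A i)) :
    0 ≤ weight (hallWeight A T) w := by
  rcases hw with ⟨h, rfl⟩ | ⟨i, _, ⟨p, hp, rfl⟩, rfl⟩
  · simp only [weight_single, one_smul, hallWeight, Sum.elim_inl]
    positivity
  · simp only [weight_sumElim, map_sum, weight_single, one_smul, Function.comp_apply, hallWeight,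
      Sum.elim_inl, Sum.elim_inr, ← sub_eq_add_neg, ← Finset.sum_sub_distrib]
    refine Finset.sum_nonneg fun x _ => sub_nonneg.2 ?_
    have hmem (hx : ⟨i, x⟩ ∈ T) : p x ∈ T.biUnion fun s => A s.1 s.2 :=
      Finset.mem_biUnion.2 ⟨_, hx, hp x⟩
    split_ifs <;> simp_all

lemma weight_hallWeight [Finite ι] (T : Finset (Σ i, τ i)) (a : σ →₀ ℕ) (b : ι →₀ ℕ) :
    weight (hallWeight A T) (sumElim a b) =
      ∑ h ∈ T.biUnion (fun s => A s.1 s.2), (a h : ℤ) - ∑ s ∈ T, (b s.1 : ℤ) := by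
  have hinl : weight (hallWeight A T ∘ Sum.inl) a =
      ∑ h ∈ T.biUnion (fun s => A s.1 s.2), (a h : ℤ) := by
    simp only [hallWeight, Sum.elim_comp_inl]
    induction a using Finsupp.induction_linear with
    | zero => simp
    | add a a' ha ha' => simp [ha, ha', Finset.sum_add_distrib]
    | single h k => simp [weight_single, single_apply]
  have hinr : weight (hallWeight A T ∘ Sum.inr) b = -∑ s ∈ T, (b s.1 : ℤ) := by
    cases nonempty_fintype ι
    simp only [hallWeight, Sum.elim_comp_inr, weight_eq_sum]
    rw [← Finset.univ_inter T, ← Finset.sum_ite_mem, Fintype.sum_sigma]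
    simp [Finset.mul_sum, -Finset.sum_boole]
  rw [weight_sumElim, hinl, hinr, sub_eq_add_neg]

theorem exists_closure_add_of_hallWeight [Finite ι] {w : σ ⊕ ι →₀ ℕ}
    (hw : ∀ T, 0 ≤ weight (hallWeight A T) w) :
    ∃ v ∈ AddSubmonoid.closure (multiFiberExponents fun i => transversalSet (A i)),
      ∃ d : σ →₀ ℕ, v + sumElim d 0 = w := by
  cases nonempty_fintype ι
  obtain ⟨a, b, rfl⟩ : ∃ a b, sumElim a b = w :=
    ⟨_, _, sumFinsuppEquivProdFinsupp.symm_apply_apply w⟩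
  obtain ⟨p, hp, hpa⟩ := exists_forall_mem_sum_single_le
    (fun s : Σ i, τ i => A s.1 s.2) (fun s => b s.1) a fun T => by
      have := hw T
      rw [weight_hallWeight, sub_nonneg] at this
      exact_mod_cast this
  let g (i : ι) (k : Fin (b i)) : σ →₀ ℕ := ∑ x, single (p ⟨i, x⟩ k) 1
  obtain ⟨d, rfl⟩ := exists_add_of_le hpa
  refine ⟨∑ i, ∑ k, sumElim (g i k) (single i 1), ?_, d, ?_⟩
  · exact sum_mem fun i _ => sum_mem fun k _ =>
      AddSubmonoid.subset_closure ⟨i, g i k, ⟨_, fun x => hp ⟨i, x⟩ k, rfl⟩, rfl⟩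
  · have hsum : ∑ i, ∑ k, sumElim (g i k) (single i 1) =
        sumElim (∑ s, ∑ k, single (p s k) 1) b := by
      ext (h | j)
      · simp only [finsetSum_apply, sumElim_inl, g, Fintype.sum_sigma]
        exact Finset.sum_congr rfl fun i _ => Finset.sum_comm
      · simp [single_apply]
    rw [hsum, ← sumElim_add, add_zero]

theorem mem_closure_multiReesExponents_iff [Finite ι] {w : σ ⊕ ι →₀ ℕ} :
    w ∈ AddSubmonoid.closure (multiReesExponents fun i => transversalSet (A i)) ↔
      ∀ c ∈ Set.range (hallWeight A), 0 ≤ weight c w := by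
  refine ⟨?_, fun hw => ?_⟩
  · rintro hw _ ⟨T, rfl⟩
    exact weight_nonneg_of_mem_closure (fun _ => weight_hallWeight_nonneg_of_mem) hw
  · obtain ⟨v, hv, d, hvd⟩ := exists_closure_add_of_hallWeight fun T => hw _ ⟨T, rfl⟩
    exact hvd ▸ add_mem (AddSubmonoid.closure_mono Set.subset_union_right hv)
      (sumElim_zero_mem_closure_multiReesExponents _ d)

theorem mem_closure_multiFiberExponents_iff [Finite ι] {w : σ ⊕ ι →₀ ℕ} :
    w ∈ AddSubmonoid.closure (multiFiberExponents fun i => transversalSet (A i)) ↔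
      ∀ c ∈ insert (degreeWeight τ) (Set.range (hallWeight A)), 0 ≤ weight c w := by
  refine ⟨?_, fun hw => ?_⟩
  · rintro hw _ (rfl | ⟨T, rfl⟩)
    · exact weight_nonneg_of_mem_closure (fun _ hv => (weight_degreeWeight_of_mem hv).ge) hw
    · exact weight_nonneg_of_mem_closure
        (fun _ hv => weight_hallWeight_nonneg_of_mem (Or.inr hv)) hw
  · obtain ⟨v, hv, d, hvd⟩ := exists_closure_add_of_hallWeight fun T => hw _ (Or.inr ⟨T, rfl⟩)
    have hv_deg : weight (degreeWeight τ) v = 0 := by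
      have hle : AddSubmonoid.closure (multiFiberExponents fun i => transversalSet (A i)) ≤
          AddMonoidHom.mker (weight (degreeWeight τ)) :=
        AddSubmonoid.closure_le.2 fun _ => weight_degreeWeight_of_mem
      exact hle hv
    have hd : d = 0 := by
      have hdeg : 0 ≤ weight (degreeWeight τ) (v + sumElim d 0) := hvd ▸ hw _ (Or.inl rfl)
      rw [map_add, hv_deg, weight_degreeWeight_sumElim_zero] at hdeg
      exact (degree_eq_zero_iff d).1 (by lia)
    rw [hd, sumElim_zero_zero, add_zero] at hvd
    exact hvd ▸ hv

end MultiReesSemigroup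

section MultiReesAlgebra

variable {K : Type*} [Field K] {n r : ℕ}

lemma multiFiber_eq_adjoin (G : Fin r → Set (Fin n →₀ ℕ)) :
    multiFiber K n r G = Algebra.adjoin K ((monomial · 1) '' multiFiberExponents G) := by
  unfold multiFiber
  congr 1
  ext f
  simp only [multiFiberExponents, Set.mem_image, Set.mem_ofPred_eq, sumElim_eq_add,
    mapDomain_single]
  grind

lemma multiRees_eq_adjoin (G : Fin r → Set (Fin n →₀ ℕ)) :
    multiRees K n r G = Algebra.adjoin K ((monomial · 1) '' multiReesExponents G) := by
  have hX : ((monomial · 1) '' Set.range fun h : Fin n => single (Sum.inl h) 1) =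
      Set.range fun h : Fin n => (X (Sum.inl h) : MvPolynomial (Fin n ⊕ Fin r) K) :=
    (Set.range_comp _ _).symm
  rw [multiReesExponents, Set.image_union, Algebra.adjoin_union, ← multiFiber_eq_adjoin, hX,
    multiFiber, ← Algebra.adjoin_union, multiRees]

variable {τ : Fin r → Type*} [∀ i, Fintype (τ i)] (A : (i : Fin r) → τ i → Finset (Fin n))

theorem isIntegrallyClosed_multiRees_transversalSet :
    IsIntegrallyClosed (multiRees K n r fun i => transversalSet (A i)) := by
  classical
  rw [multiRees_eq_adjoin]
  have := isIntegrallyClosedIn_adjoin_monomial (R := K) _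
    fun _ => mem_closure_multiReesExponents_iff (A := A)
  exact .of_isIntegrallyClosed_of_isIntegrallyClosedIn _ (MvPolynomial (Fin n ⊕ Fin r) K)

theorem isIntegrallyClosed_multiFiber_transversalSet :
    IsIntegrallyClosed (multiFiber K n r fun i => transversalSet (A i)) := by
  classical
  rw [multiFiber_eq_adjoin]
  have := isIntegrallyClosedIn_adjoin_monomial (R := K) _
    fun _ => mem_closure_multiFiberExponents_iff (A := A)
  exact .of_isIntegrallyClosed_of_isIntegrallyClosedIn _ (MvPolynomial (Fin n ⊕ Fin r) K)

end MultiReesAlgebra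

section LBorel

variable {n : ℕ} {U : Set (Fin n)}

lemma LBorelStep.add_right {m m' : Fin n →₀ ℕ} (h : LBorelStep n U m m') (k : Fin n →₀ ℕ) :
    LBorelStep n U (m + k) (m' + k) := by
  obtain ⟨i, j, hi, hj, hij, hm, he⟩ := h
  exact ⟨i, j, hi, hj, hij, Nat.add_pos_left hm _, by rw [add_right_comm, he, add_right_comm]⟩

lemma add_mem_LBorelSet {m m' k k' : Fin n →₀ ℕ} (hm : m' ∈ LBorelSet n U m)
    (hk : k' ∈ LBorelSet n U k) : m' + k' ∈ LBorelSet n U (m + k) := by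
  have hright : Relation.ReflTransGen (LBorelStep n U) (m + k) (m' + k) :=
    hm.lift (· + k) fun _ _ h => h.add_right k
  have hleft : Relation.ReflTransGen (LBorelStep n U) (m' + k) (m' + k') :=
    hk.lift (m' + ·) fun a b h => by simpa only [add_comm m'] using h.add_right m'
  exact hright.trans hleft

lemma sum_mem_LBorelSet {ι : Type*} (s : Finset ι) {m m' : ι → Fin n →₀ ℕ}
    (h : ∀ x ∈ s, m' x ∈ LBorelSet n U (m x)) :
    ∑ x ∈ s, m' x ∈ LBorelSet n U (∑ x ∈ s, m x) := by
  classical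
  induction s using Finset.induction_on with
  | empty => exact Relation.ReflTransGen.refl
  | insert a s ha ih =>
    rw [Finset.sum_insert ha, Finset.sum_insert ha]
    exact add_mem_LBorelSet (h a (by simp)) (ih fun x hx => h x (by simp [hx]))

open Classical in
/-- The indices of the variables by which `L_U`-Borel moves can replace a factor `x_j`. -/
noncomputable def lBorelSlot (U : Set (Fin n)) (j : Fin n) : Finset (Fin n) :=
  {h | h = j ∨ h < j ∧ h ∈ U ∧ j ∈ U}

lemma mem_lBorelSlot {h j : Fin n} :
    h ∈ lBorelSlot U j ↔ h = j ∨ h < j ∧ h ∈ U ∧ j ∈ U := by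
  simp [lBorelSlot]

lemma single_mem_LBorelSet {h j : Fin n} (hj : h ∈ lBorelSlot U j) :
    single h 1 ∈ LBorelSet n U (single j 1) := by
  obtain rfl | ⟨hlt, hhU, hjU⟩ := mem_lBorelSlot.1 hj
  · exact Relation.ReflTransGen.refl
  · exact Relation.ReflTransGen.single ⟨h, j, hhU, hjU, hlt, by simp, add_comm _ _⟩

lemma sum_single_fst_eq {σ : Type*} [Fintype σ] (M : σ →₀ ℕ) :
    ∑ x : Σ j, Fin (M j), single x.1 1 = M := by
  ext j
  simp [Fintype.sum_sigma]

theorem LBorelSet_eq_transversalSet (U : Set (Fin n)) (M : Fin n →₀ ℕ) :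
    LBorelSet n U M = transversalSet fun x : Σ j, Fin (M j) => lBorelSlot U x.1 := by
  refine Set.Subset.antisymm (fun g hg => ?_) ?_
  · induction hg with
    | refl => exact ⟨Sigma.fst, fun x => mem_lBorelSlot.2 (Or.inl rfl), sum_single_fst_eq M⟩
    | tail _ hstep ih =>
      obtain ⟨i, j, hi, hj, hij, hpos, hmove⟩ := hstep
      refine mem_transversalSet_of_exchange ih hpos (fun x hx => mem_lBorelSlot.2 (Or.inr ?_)) hmove
      obtain rfl | ⟨hlt, -, hxU⟩ := mem_lBorelSlot.1 hx
      · exact ⟨hij, hi, hj⟩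
      · exact ⟨hij.trans hlt, hi, hxU⟩
  · rintro _ ⟨p, hp, rfl⟩
    have hsum := sum_mem_LBorelSet Finset.univ fun x _ => single_mem_LBorelSet (hp x)
    rwa [sum_single_fst_eq] at hsum

end LBorel

theorem multiRees_LBorel_normal_general (K : Type*) [Field K] {n r : ℕ}
    (U : Fin r → Set (Fin n)) (M : Fin r → (Fin n →₀ ℕ)) :
    (IsDomain (multiRees K n r fun i => LBorelSet n (U i) (M i)) ∧
      IsIntegrallyClosed (multiRees K n r fun i => LBorelSet n (U i) (M i))) ∧
    (IsDomain (multiFiber K n r fun i => LBorelSet n (U i) (M i)) ∧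
      IsIntegrallyClosed (multiFiber K n r fun i => LBorelSet n (U i) (M i))) := by
  have hG : (fun i => LBorelSet n (U i) (M i)) =
      fun i => transversalSet fun x : Σ j, Fin (M i j) => lBorelSlot (U i) x.1 :=
    funext fun i => LBorelSet_eq_transversalSet (U i) (M i)
  rw [hG]
  exact ⟨⟨inferInstance, isIntegrallyClosed_multiRees_transversalSet _⟩,
    inferInstance, isIntegrallyClosed_multiFiber_transversalSet _⟩

/-- Corollary 6.10: if `I_1,…,I_r` are principal `L`-Borel ideals (with `I_i` the
principal `L_{U_i}`-Borel ideal generated by `M_i`) whose collection admits an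
`𝖫`-free ordering with respect to its essential variable sets `E_1,…,E_r`, then the
multi-Rees algebra `R[I_1t_1,…,I_rt_r]` and the multi-fiber ring `K[I_1t_1,…,I_rt_r]`
are normal domains: integral domains integrally closed in their fields of fractions. -/
theorem multiRees_LBorel_normal
    (K : Type*) [Field K] {n r : ℕ}
    (U : Fin r → Set (Fin n)) (M : Fin r → (Fin n →₀ ℕ))
    (E : Fin r → Set (Fin n))
    (hE : ∀ i : Fin r, E i = {j : Fin n |
      (∃ g ∈ LBorelSet n (U i) (M i), 0 < g j) ∧
      ∃ g ∈ LBorelSet n (U i) (M i), ∃ g' ∈ LBorelSet n (U i) (M i), g j ≠ g' j})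
    (hLfree : ∃ σ : Equiv.Perm (Fin r),
      ∀ (h j : Fin n) (u v : Fin r), h < j → u < v →
        h ∈ E (σ u) → j ∈ E (σ u) → j ∈ E (σ v) → h ∈ E (σ v)) :
    (IsDomain (multiRees K n r fun i => LBorelSet n (U i) (M i)) ∧
      IsIntegrallyClosed (multiRees K n r fun i => LBorelSet n (U i) (M i))) ∧
    (IsDomain (multiFiber K n r fun i => LBorelSet n (U i) (M i)) ∧
      IsIntegrallyClosed (multiFiber K n r fun i => LBorelSet n (U i) (M i))) :=
  multiRees_LBorel_normal_general K U M
end
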